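/- arXiv:1810.02846 — 2 statements merged into one kernel-verified Lean document; each statement's English description precedes it below -/
import Mathlib

section
/- The 𝕜-submodule T^A_𝔞(n,d) is closed under the multiplication of S^A(n,d); that is, T^A_𝔞(n,d) is a 𝕜-subalgebra of S^A(n,d). Moreover, if (A,𝔞) is a unital good pair, then T^A_𝔞(n,d) is a unital subalgebra, i.e. it contains the identity element 1_A ⊗ ⋯ ⊗ 1_A of S^A(n,d). -/
open Finset

open scoped Classical TensorProduct

noncomputable section

namespace GS

/-- A *good pair* `(A, 𝔞)`: a `𝕜`-superalgebra `A = ev ⊕ od` which is free as a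
`𝕜`-supermodule, together with a subalgebra `𝔞 = aa ⊆ A₀` such that `𝔞` and `A/𝔞` are free,
a complement `𝔠 = cc` of `𝔞` in `A₀`, and an `(A,𝔞)`-basis `B = B_𝔞 ⊔ B_𝔠 ⊔ B_1`
(encoded by `bas : Basis β 𝕜 A` with the partition `part : β → Fin 3`,
where `0` = `B_𝔞`, `1` = `B_𝔠`, `2` = `B_1`). -/
structure GoodPair (𝕜 A β : Type) [CommRing 𝕜] [NonUnitalRing A] [Module 𝕜 A] : Type where
  ev : Submodule 𝕜 A
  od : Submodule 𝕜 A
  compl : IsCompl ev od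
  mul_ee : ∀ a ∈ ev, ∀ b ∈ ev, a * b ∈ ev
  mul_eo : ∀ a ∈ ev, ∀ b ∈ od, a * b ∈ od
  mul_oe : ∀ a ∈ od, ∀ b ∈ ev, a * b ∈ od
  mul_oo : ∀ a ∈ od, ∀ b ∈ od, a * b ∈ ev
  free_ev : Module.Free 𝕜 ev
  free_od : Module.Free 𝕜 od
  aa : Submodule 𝕜 A
  aa_le_ev : aa ≤ ev
  aa_mul : ∀ a ∈ aa, ∀ b ∈ aa, a * b ∈ aa
  free_aa : Module.Free 𝕜 aa
  free_quot : Module.Free 𝕜 (A ⧸ aa)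
  cc : Submodule 𝕜 A
  aa_inf_cc : aa ⊓ cc = ⊥
  aa_sup_cc : aa ⊔ cc = ev
  bas : Module.Basis β 𝕜 A
  part : β → Fin 3
  bas_mem_aa : ∀ i, part i = 0 → bas i ∈ aa
  bas_mem_cc : ∀ i, part i = 1 → bas i ∈ cc
  bas_mem_od : ∀ i, part i = 2 → bas i ∈ od

variable {𝕜 A β : Type} [CommRing 𝕜] [NonUnitalRing A] [Module 𝕜 A]

/-- An element is homogeneous if it lies in the even or the odd part. -/
def Homog (P : GoodPair 𝕜 A β) (a : A) : Prop := a ∈ P.ev ∨ a ∈ P.od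

/-- `H`, the set of nonzero homogeneous elements of `A`. -/
def Hset (P : GoodPair 𝕜 A β) : Set A := {a | Homog P a ∧ a ≠ 0}

/-- `⟨𝐚,𝐜⟩ = #{(k,l) : k > l, a_k odd, c_l odd}` (the Koszul sign count). -/
def koz (od : Submodule 𝕜 A) {d : ℕ} (a c : Fin d → A) : ℕ :=
  (univ.filter fun kl : Fin d × Fin d => kl.2 < kl.1 ∧ a kl.1 ∈ od ∧ c kl.2 ∈ od).card

/-- `⟨σ;𝐚⟩ = #{(k,l) : k < l, σ⁻¹k > σ⁻¹l, a_k and a_l odd}`. -/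
def sgnc (od : Submodule 𝕜 A) {d : ℕ} (σ : Equiv.Perm (Fin d)) (a : Fin d → A) : ℕ :=
  (univ.filter fun kl : Fin d × Fin d =>
    kl.1 < kl.2 ∧ σ⁻¹ kl.2 < σ⁻¹ kl.1 ∧ a kl.1 ∈ od ∧ a kl.2 ∈ od).card

/-- `⟨𝐚,𝐫,𝐬⟩ = #{(k,l) : k < l, a_k, a_l odd, (a_k,r_k,s_k) > (a_l,r_l,s_l)}` with respect to
the fixed total order `ord` on `A × [1,n] × [1,n]`. -/
def ang {n : ℕ} (od : Submodule 𝕜 A) (ord : LinearOrder (A × Fin n × Fin n))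
    {d : ℕ} (a : Fin d → A) (r s : Fin d → Fin n) : ℕ :=
  (univ.filter fun kl : Fin d × Fin d =>
    kl.1 < kl.2 ∧ a kl.1 ∈ od ∧ a kl.2 ∈ od ∧
      ord.lt (a kl.2, r kl.2, s kl.2) (a kl.1, r kl.1, s kl.1)).card

/-- `(𝐚,𝐫,𝐬) ∈ Tri^H(n,d)`: all entries are nonzero homogeneous, and a repeated entry
triple forces evenness. -/
def IsTriH (P : GoodPair 𝕜 A β) {n d : ℕ} (a : Fin d → A) (r s : Fin d → Fin n) : Prop :=
  (∀ k, a k ∈ Hset P) ∧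
    ∀ k l : Fin d, k ≠ l → (a k, r k, s k) = (a l, r l, s l) → a k ∈ P.ev

/-- `(𝐛,𝐫,𝐬) ∈ Tri^B(n,d)` for words of basis elements. -/
def IsTriB (P : GoodPair 𝕜 A β) {n d : ℕ} (b : Fin d → β) (r s : Fin d → Fin n) : Prop :=
  ∀ k l : Fin d, k ≠ l → ((b k, r k, s k) : β × Fin n × Fin n) = (b l, r l, s l) →
    P.part (b k) ≠ 2

/-- Minimal length representatives of the cosets `(S_e × S_f)\S_{e+f}`. -/
def IsShuffle (e f : ℕ) (σ : Equiv.Perm (Fin (e + f))) : Prop :=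
  (∀ k l : Fin (e + f), k < l → (l : ℕ) < e → σ⁻¹ k < σ⁻¹ l) ∧
  (∀ k l : Fin (e + f), k < l → e ≤ (k : ℕ) → σ⁻¹ k < σ⁻¹ l)

/-- The tower of superalgebras `M_n(A)^{⊗d}`, `d ≥ 0`, axiomatised.  `X a r s` is the pure
tensor `ξ^{a_1}_{r_1,s_1} ⊗ ⋯ ⊗ ξ^{a_d}_{r_d,s_d}` of matrix units; it is multilinear in the
`A`-entries, the pure tensors of basis elements form a basis, multiplication is the sign-twisted
(Koszul) componentwise one, `act` is the right action of the symmetric groups by superalgebra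
automorphisms, `evT/odT` is the induced supermodule structure, `star` is the `*`-(shuffle)
product and `nab` gives the components of the deconcatenation coproduct `∇`. -/
structure Tower (𝕜 A β : Type) [CommRing 𝕜] [NonUnitalRing A] [Module 𝕜 A]
    (n : ℕ) (T : ℕ → Type) [∀ e, NonUnitalRing (T e)] [∀ e, Module 𝕜 (T e)]
    (P : GoodPair 𝕜 A β) : Type where
  X : ∀ {e : ℕ}, (Fin e → A) → (Fin e → Fin n) → (Fin e → Fin n) → T e
  X_update_add : ∀ {e : ℕ} (a : Fin e → A) (r s : Fin e → Fin n) (k : Fin e) (x y : A),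
    X (Function.update a k (x + y)) r s
      = X (Function.update a k x) r s + X (Function.update a k y) r s
  X_update_smul : ∀ {e : ℕ} (a : Fin e → A) (r s : Fin e → Fin n) (k : Fin e) (c : 𝕜) (x : A),
    X (Function.update a k (c • x)) r s = c • X (Function.update a k x) r s
  bas : ∀ e : ℕ, Module.Basis ((Fin e → β) × (Fin e → Fin n) × (Fin e → Fin n)) 𝕜 (T e)
  bas_eq : ∀ (e : ℕ) (b : Fin e → β) (r s : Fin e → Fin n),
    bas e (b, r, s) = X (fun k => P.bas (b k)) r s
  X_mul : ∀ {e : ℕ} (a c : Fin e → A) (r s t u : Fin e → Fin n),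
    (∀ k, Homog P (a k)) → (∀ k, Homog P (c k)) →
    X a r s * X c t u
      = if s = t then ((-1 : ℤ) ^ koz P.od a c) • X (fun k => a k * c k) r u else 0
  act : ∀ {e : ℕ}, Equiv.Perm (Fin e) → T e →ₗ[𝕜] T e
  act_act : ∀ {e : ℕ} (σ τ : Equiv.Perm (Fin e)) (x : T e), act τ (act σ x) = act (σ * τ) x
  act_mul : ∀ {e : ℕ} (σ : Equiv.Perm (Fin e)) (x y : T e), act σ (x * y) = act σ x * act σ y
  act_X : ∀ {e : ℕ} (σ : Equiv.Perm (Fin e)) (a : Fin e → A) (r s : Fin e → Fin n),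
    (∀ k, Homog P (a k)) →
    act σ (X a r s) = ((-1 : ℤ) ^ sgnc P.od σ a) • X (a ∘ σ) (r ∘ σ) (s ∘ σ)
  evT : ∀ e : ℕ, Submodule 𝕜 (T e)
  odT : ∀ e : ℕ, Submodule 𝕜 (T e)
  complT : ∀ e : ℕ, IsCompl (evT e) (odT e)
  X_mem_evT : ∀ {e : ℕ} (a : Fin e → A) (r s : Fin e → Fin n), (∀ k, Homog P (a k)) →
    Even (univ.filter fun k => a k ∈ P.od).card → X a r s ∈ evT e
  X_mem_odT : ∀ {e : ℕ} (a : Fin e → A) (r s : Fin e → Fin n), (∀ k, Homog P (a k)) →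
    ¬ Even (univ.filter fun k => a k ∈ P.od).card → X a r s ∈ odT e
  star : ∀ {e f : ℕ}, T e →ₗ[𝕜] T f →ₗ[𝕜] T (e + f)
  star_X : ∀ {e f : ℕ} (a : Fin e → A) (r s : Fin e → Fin n)
      (c : Fin f → A) (t u : Fin f → Fin n),
    star (X a r s) (X c t u)
      = ∑ σ ∈ univ.filter (IsShuffle e f),
          act σ (X (Fin.append a c) (Fin.append r t) (Fin.append s u))
  nab : ∀ e f : ℕ, T (e + f) →ₗ[𝕜] TensorProduct 𝕜 (T e) (T f)
  nab_X : ∀ (e f : ℕ) (a : Fin (e + f) → A) (r s : Fin (e + f) → Fin n),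
    nab e f (X a r s)
      = (X (a ∘ Fin.castAdd f) (r ∘ Fin.castAdd f) (s ∘ Fin.castAdd f))
          ⊗ₜ[𝕜] (X (a ∘ Fin.natAdd e) (r ∘ Fin.natAdd e) (s ∘ Fin.natAdd e))

variable {n : ℕ} {T : ℕ → Type} [∀ e, NonUnitalRing (T e)] [∀ e, Module 𝕜 (T e)]

/-- `ξ^𝐚_{𝐫,𝐬}`, the signed sum of the pure tensors over the `S_d`-orbit of `(𝐚,𝐫,𝐬)`. -/
def xiH {P : GoodPair 𝕜 A β} (D : Tower 𝕜 A β n T P) (ord : LinearOrder (A × Fin n × Fin n))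
    {d : ℕ} (a : Fin d → A) (r s : Fin d → Fin n) : T d :=
  ∑ w ∈ (univ.image fun σ : Equiv.Perm (Fin d) => (a ∘ σ, r ∘ σ, s ∘ σ)),
    ((-1 : ℤ) ^ (ang P.od ord a r s + ang P.od ord w.1 w.2.1 w.2.2)) • D.X w.1 w.2.1 w.2.2

/-- `ξ^𝐛_{𝐫,𝐬}` for a word `𝐛` of basis elements. -/
def xiB {P : GoodPair 𝕜 A β} (D : Tower 𝕜 A β n T P) (ord : LinearOrder (A × Fin n × Fin n))
    {d : ℕ} (b : Fin d → β) (r s : Fin d → Fin n) : T d :=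
  xiH D ord (fun k => P.bas (b k)) r s

/-- `[𝐛,𝐫,𝐬]^b_{r,s}`, the multiplicity of an entry triple in a word triple. -/
def mco {n d : ℕ} (b : Fin d → β) (r s : Fin d → Fin n) (w : β × Fin n × Fin n) : ℕ :=
  (univ.filter fun k => ((b k, r k, s k) : β × Fin n × Fin n) = w).card

/-- `∏ ([𝐛,𝐫,𝐬]^b_{r,s})!` over the entry triples whose basis element satisfies `sel`
(e.g. `sel i = (part i = 1)` gives `[𝐛,𝐫,𝐬]^!_𝔠`). -/
def facSel (sel : β → Prop) {n d : ℕ} (b : Fin d → β) (r s : Fin d → Fin n) : ℕ :=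
  ∏ w ∈ ((univ.image fun k => ((b k, r k, s k) : β × Fin n × Fin n)).filter fun w => sel w.1),
    Nat.factorial (mco b r s w)

/-- `η^𝐛_{𝐫,𝐬} := [𝐛,𝐫,𝐬]^!_𝔠 • ξ^𝐛_{𝐫,𝐬}`. -/
def eta {P : GoodPair 𝕜 A β} (D : Tower 𝕜 A β n T P) (ord : LinearOrder (A × Fin n × Fin n))
    {d : ℕ} (b : Fin d → β) (r s : Fin d → Fin n) : T d :=
  facSel (fun i => P.part i = 1) b r s • xiB D ord b r s

/-- `S^A(n,d) = (M_n(A)^{⊗d})^{S_d}`, the invariants. -/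
def SchurS {P : GoodPair 𝕜 A β} (D : Tower 𝕜 A β n T P) (d : ℕ) : Submodule 𝕜 (T d) where
  carrier := {x | ∀ σ : Equiv.Perm (Fin d), D.act σ x = x}
  add_mem' := by
    intro x y hx hy σ
    rw [map_add, hx σ, hy σ]
  zero_mem' := by
    intro σ; exact map_zero _
  smul_mem' := by
    intro c x hx σ
    rw [map_smul, hx σ]

/-- The generalized Schur algebra `T^A_𝔞(n,d)`, the `𝕜`-span of the `η^𝐛_{𝐫,𝐬}`,
`(𝐛,𝐫,𝐬) ∈ Tri^B(n,d)`. -/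
def SchurT {P : GoodPair 𝕜 A β} (D : Tower 𝕜 A β n T P) (ord : LinearOrder (A × Fin n × Fin n))
    (d : ℕ) : Submodule 𝕜 (T d) :=
  Submodule.span 𝕜 {x | ∃ b r s, IsTriB P b r s ∧ x = eta D ord b r s}

/-- `S^𝔞(n,d) = (M_n(𝔞)^{⊗d})^{S_d} ⊆ S^A(n,d)`. -/
def SchurA {P : GoodPair 𝕜 A β} (D : Tower 𝕜 A β n T P) (d : ℕ) : Submodule 𝕜 (T d) :=
  Submodule.span 𝕜 {x | ∃ a r s, (∀ k, a k ∈ P.aa) ∧ x = D.X a r s} ⊓ SchurS D d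

/-- `ξ^f = E^f ⊗ ⋯ ⊗ E^f` for `f ∈ A`. -/
def xiIdem {P : GoodPair 𝕜 A β} (D : Tower 𝕜 A β n T P) (f : A) (d : ℕ) : T d :=
  ∑ r : Fin d → Fin n, D.X (fun _ => f) r r

/-- Transport along an equality of degrees. -/
def tcast {e f : ℕ} (h : e = f) : T e ≃ₗ[𝕜] T f := by
  subst h; exact LinearEquiv.refl 𝕜 (T e)

/-- Iterated `*`-product `x_1 * x_2 * ⋯ * x_d` of degree-one pure tensors read off from a
word (associated to the left). -/
def starIter {P : GoodPair 𝕜 A β} (D : Tower 𝕜 A β n T P) :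
    ∀ (e : ℕ), (Fin e → A) → (Fin e → Fin n) → (Fin e → Fin n) → T e
  | 0, _, _, _ => D.X Fin.elim0 Fin.elim0 Fin.elim0
  | (e + 1), a, r, s =>
      D.star (starIter D e (a ∘ Fin.castSucc) (r ∘ Fin.castSucc) (s ∘ Fin.castSucc))
        (D.X (fun _ : Fin 1 => a (Fin.last e)) (fun _ => r (Fin.last e)) (fun _ => s (Fin.last e)))

/-- Iterated `*`-product of blockwise given elements. -/
def starBlocks {P : GoodPair 𝕜 A β} (D : Tower 𝕜 A β n T P) :
    ∀ (q : ℕ) (sz : Fin q → ℕ), (∀ m, T (sz m)) → T (∑ m, sz m)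
  | 0, sz, _ => cast (congrArg T (Fin.sum_univ_zero sz).symm) (D.X Fin.elim0 Fin.elim0 Fin.elim0)
  | (q + 1), sz, x =>
      cast (congrArg T (Fin.sum_univ_castSucc sz).symm)
        (D.star (starBlocks D q (fun m => sz m.castSucc) (fun m => x m.castSucc))
          (x (Fin.last q)))

/-- Concatenation of a tuple of words of lengths `sz 0, …, sz (q-1)`. -/
def concatB {α : Type} : ∀ {q : ℕ} (sz : Fin q → ℕ), (∀ m, Fin (sz m) → α) → Fin (∑ m, sz m) → α
  | 0, sz, _ => fun k => Fin.elim0 (cast (congrArg Fin (Fin.sum_univ_zero sz)) k)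
  | (q + 1), sz, f => fun k =>
      Fin.append (concatB (fun m => sz m.castSucc) (fun m => f m.castSucc)) (f (Fin.last q))
        (cast (congrArg Fin (Fin.sum_univ_castSucc sz)) k)

/-- A triple of words `(𝐛,𝐫,𝐬)`. -/
abbrev WordTriple (β : Type) (n d : ℕ) : Type :=
  (Fin d → β) × (Fin d → Fin n) × (Fin d → Fin n)

/-- The diagonal right place-permutation action on triples of words. -/
def wAct {d : ℕ} (w : WordTriple β n d) (σ : Equiv.Perm (Fin d)) : WordTriple β n d :=
  (w.1 ∘ σ, w.2.1 ∘ σ, w.2.2 ∘ σ)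

/-- The `k`-th entry triple `(b_k, r_k, s_k)` (with `b_k` realized in `A`). -/
def entryAt (P : GoodPair 𝕜 A β) {n d : ℕ} (w : WordTriple β n d) (k : Fin d) :
    A × Fin n × Fin n :=
  (P.bas (w.1 k), w.2.1 k, w.2.2 k)

/-- The lexicographic order on triples of words induced by the total order `ord`. -/
def wordLE (P : GoodPair 𝕜 A β) {n : ℕ} (ord : LinearOrder (A × Fin n × Fin n)) {d : ℕ}
    (w w' : WordTriple β n d) : Prop :=
  (∀ k, entryAt P w k = entryAt P w' k) ∨
    ∃ l : Fin d, (∀ k, k < l → entryAt P w k = entryAt P w' k) ∧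
      ord.lt (entryAt P w l) (entryAt P w' l)

/-- `Tri^B_0(n,d)`: the lexicographically minimal representatives of the `S_d`-orbits on
`Tri^B(n,d)`. -/
def IsTri0 (P : GoodPair 𝕜 A β) {n : ℕ} (ord : LinearOrder (A × Fin n × Fin n)) {d : ℕ}
    (w : WordTriple β n d) : Prop :=
  IsTriB P w.1 w.2.1 w.2.2 ∧ ∀ σ : Equiv.Perm (Fin d), wordLE P ord w (wAct w σ)

/-- The first `l` letters of each word. -/
def firstW {d : ℕ} (l : ℕ) (hl : l ≤ d) (w : WordTriple β n d) : WordTriple β n l :=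
  (fun k => w.1 ⟨k, lt_of_lt_of_le k.isLt hl⟩,
   fun k => w.2.1 ⟨k, lt_of_lt_of_le k.isLt hl⟩,
   fun k => w.2.2 ⟨k, lt_of_lt_of_le k.isLt hl⟩)

/-- The last `d - l` letters of each word. -/
def lastW {d : ℕ} (l : ℕ) (hl : l ≤ d) (w : WordTriple β n d) : WordTriple β n (d - l) :=
  (fun k => w.1 ⟨l + (k : ℕ), by have := k.isLt; omega⟩,
   fun k => w.2.1 ⟨l + (k : ℕ), by have := k.isLt; omega⟩,
   fun k => w.2.2 ⟨l + (k : ℕ), by have := k.isLt; omega⟩)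

/-- Concatenation of words. -/
def appF {α : Type} {d : ℕ} (l : ℕ) (hl : l ≤ d) (f : Fin l → α) (g : Fin (d - l) → α) :
    Fin d → α :=
  fun k => if hk : (k : ℕ) < l then f ⟨k, hk⟩ else g ⟨(k : ℕ) - l, by have := k.isLt; omega⟩

/-- Concatenation `T¹T²` of two triples of words. -/
def concatW {d : ℕ} (l : ℕ) (hl : l ≤ d) (p : WordTriple β n l × WordTriple β n (d - l)) :
    WordTriple β n d :=
  (appF l hl p.1.1 p.2.1, appF l hl p.1.2.1 p.2.2.1, appF l hl p.1.2.2 p.2.2.2)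

/-- `Spl_l(T)`, the set of `l`-splits of `T ∈ Tri^B_0(n,d)`. -/
def splitsF (P : GoodPair 𝕜 A β) {n : ℕ} (ord : LinearOrder (A × Fin n × Fin n)) {d : ℕ}
    (l : ℕ) (hl : l ≤ d) (w : WordTriple β n d) :
    Finset (WordTriple β n l × WordTriple β n (d - l)) :=
  (univ.image fun σ : Equiv.Perm (Fin d) =>
      (firstW l hl (wAct w σ), lastW l hl (wAct w σ))).filter
    fun p => IsTri0 P ord p.1 ∧ IsTri0 P ord p.2

/-- The number of inversions (= Coxeter length) of a permutation. -/
def invCount {d : ℕ} (σ : Equiv.Perm (Fin d)) : ℕ :=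
  (univ.filter fun kl : Fin d × Fin d => kl.1 < kl.2 ∧ σ kl.2 < σ kl.1).card

/-- The submodule `{x | x·ε = x}` (for an idempotent `ε` this is `R·ε`). -/
def rfix (𝕜 : Type) {R : Type} [CommRing 𝕜] [NonUnitalRing R] [Module 𝕜 R]
    [IsScalarTower 𝕜 R R] (ε : R) : Submodule 𝕜 R where
  carrier := {x | x * ε = x}
  add_mem' := by
    intro x y hx hy
    simp only [Set.mem_setOf_eq] at *
    rw [add_mul, hx, hy]
  zero_mem' := by simp
  smul_mem' := by
    intro c x hx
    simp only [Set.mem_setOf_eq] at *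
    rw [smul_mul_assoc, hx]

/-- Right `εSε`-module endomorphism property for a map of `S·ε = M ⊓ rfix ε`,
where `S` is the (possibly non-unital) algebra realized as the submodule `M` of `R`. -/
def IsEquivar (𝕜 : Type) {R : Type} [CommRing 𝕜] [NonUnitalRing R] [Module 𝕜 R]
    [IsScalarTower 𝕜 R R] (M : Submodule 𝕜 R) (ε : R)
    (f : ↥(M ⊓ rfix 𝕜 ε) →ₗ[𝕜] ↥(M ⊓ rfix 𝕜 ε)) : Prop :=
  ∀ (x : ↥(M ⊓ rfix 𝕜 ε)) (c : R), c ∈ M → ε * c * ε = c →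
    ∀ h : (x : R) * c ∈ M ⊓ rfix 𝕜 ε,
      ((f ⟨(x : R) * c, h⟩ : ↥(M ⊓ rfix 𝕜 ε)) : R) = (f x : R) * c

/-- `ε` is a *double centralizer idempotent* for the algebra `M ⊆ R`: the left
multiplication map `λ : M → End_{εMε}(Mε)` is bijective. -/
def IsDCI (𝕜 : Type) {R : Type} [CommRing 𝕜] [NonUnitalRing R] [Module 𝕜 R]
    [IsScalarTower 𝕜 R R] (M : Submodule 𝕜 R) (ε : R) : Prop :=
  (∀ s ∈ M, ∀ s' ∈ M, (∀ x ∈ M ⊓ rfix 𝕜 ε, s * x = s' * x) → s = s') ∧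
  (∀ f : ↥(M ⊓ rfix 𝕜 ε) →ₗ[𝕜] ↥(M ⊓ rfix 𝕜 ε), IsEquivar 𝕜 M ε f →
    ∃ s ∈ M, ∀ x : ↥(M ⊓ rfix 𝕜 ε), (f x : R) = s * (x : R))

theorem od_ev_zero (P : GoodPair 𝕜 A β) {a : A} (h1 : a ∈ P.ev) (h2 : a ∈ P.od) : a = 0 :=
  (Submodule.disjoint_def.mp P.compl.disjoint) a h1 h2

theorem cc_le_ev (P : GoodPair 𝕜 A β) : P.cc ≤ P.ev := by
  rw [← P.aa_sup_cc]; exact le_sup_right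

theorem part_cases (P : GoodPair 𝕜 A β) (i : β) : P.part i = 0 ∨ P.part i = 1 ∨ P.part i = 2 := by
  generalize P.part i = p
  revert p; decide

theorem bas_homog (P : GoodPair 𝕜 A β) (i : β) : Homog P (P.bas i) := by
  rcases part_cases P i with h | h | h
  · exact Or.inl (P.aa_le_ev (P.bas_mem_aa i h))
  · exact Or.inl (cc_le_ev P (P.bas_mem_cc i h))
  · exact Or.inr (P.bas_mem_od i h)

theorem bas_od_iff [Nontrivial 𝕜] (P : GoodPair 𝕜 A β) (i : β) :
    P.bas i ∈ P.od ↔ P.part i = 2 := by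
  refine ⟨fun h => ?_, P.bas_mem_od i⟩
  rcases part_cases P i with h' | h' | h'
  · exact absurd (od_ev_zero P (P.aa_le_ev (P.bas_mem_aa i h')) h) (P.bas.ne_zero i)
  · exact absurd (od_ev_zero P (cc_le_ev P (P.bas_mem_cc i h')) h) (P.bas.ne_zero i)
  · exact h'

/-- projection to the span of the basis elements of a given type -/
def projP (P : GoodPair 𝕜 A β) (p : Fin 3) : A →ₗ[𝕜] A :=
  P.bas.constr 𝕜 (fun j => if P.part j = p then P.bas j else 0)

theorem projP_mem (P : GoodPair 𝕜 A β) (p : Fin 3) (M : Submodule 𝕜 A)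
    (h : ∀ i, P.part i = p → P.bas i ∈ M) (a : A) : projP P p a ∈ M := by
  rw [projP, Module.Basis.constr_apply]
  refine Submodule.finsuppSum_mem _ _ _ _ fun c _ => M.smul_mem _ ?_
  split_ifs with h'
  · exact h _ h'
  · exact M.zero_mem

theorem projP_sum (P : GoodPair 𝕜 A β) (a : A) :
    projP P 0 a + projP P 1 a + projP P 2 a = a := by
  have : projP P 0 + projP P 1 + projP P 2 = LinearMap.id := by
    refine P.bas.ext fun i => ?_
    simp only [projP, LinearMap.add_apply, Module.Basis.constr_basis, LinearMap.id_apply]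
    rcases part_cases P i with h | h | h <;> simp [h]
  exact congrArg (fun f => f a) this

theorem repr_projP (P : GoodPair 𝕜 A β) (a : A) (i : β) :
    P.bas.repr (projP P (P.part i) a) i = P.bas.repr a i := by
  have : (P.bas.coord i) ∘ₗ (projP P (P.part i)) = P.bas.coord i := by
    refine P.bas.ext fun j => ?_
    simp only [projP, LinearMap.comp_apply, Module.Basis.constr_basis]
    by_cases h : j = i
    · subst h; simp
    · split_ifs <;> simp [h]
  exact congrArg (fun f => f a) this

theorem repr_aa_zero (P : GoodPair 𝕜 A β) {a : A} (ha : a ∈ P.aa) {i : β} (hi : P.part i = 1) :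
    P.bas.repr a i = 0 := by
  have h0 := projP_mem P 0 P.aa P.bas_mem_aa a
  have h1 := projP_mem P 1 P.cc P.bas_mem_cc a
  have h2 := projP_mem P 2 P.od P.bas_mem_od a
  have hs := projP_sum P a
  have e2 : projP P 2 a = 0 := by
    refine od_ev_zero P ?_ h2
    have : projP P 2 a = a - projP P 0 a - projP P 1 a := by
      rw [sub_sub]; exact eq_sub_of_add_eq' hs
    rw [this]
    exact sub_mem (sub_mem (P.aa_le_ev ha) (P.aa_le_ev h0)) (cc_le_ev P h1)
  rw [e2, add_zero] at hs
  have e1 : projP P 1 a = 0 := by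
    have : projP P 1 a = a - projP P 0 a := eq_sub_of_add_eq' hs
    have h3 : projP P 1 a ∈ P.aa ⊓ P.cc := ⟨this ▸ sub_mem ha h0, h1⟩
    rw [P.aa_inf_cc] at h3
    exact h3
  rw [← repr_projP, hi, e1]; simp

/-- `[𝐛,𝐫,𝐬]^!_𝔠` for a triple -/
def facW (P : GoodPair 𝕜 A β) {d : ℕ} (w : WordTriple β n d) : ℕ :=
  facSel (fun i => P.part i = 1) w.1 w.2.1 w.2.2

/-- sign count of a permutation on a basis triple -/
def sgW (P : GoodPair 𝕜 A β) {d : ℕ} (σ : Equiv.Perm (Fin d)) (w : WordTriple β n d) : ℕ :=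
  sgnc P.od σ (fun k => P.bas (w.1 k))

theorem wAct_mul {d : ℕ} (w : WordTriple β n d) (σ τ : Equiv.Perm (Fin d)) :
    wAct (wAct w σ) τ = wAct w (σ * τ) := rfl

theorem wAct_one {d : ℕ} (w : WordTriple β n d) : wAct w 1 = w := rfl

theorem wAct_inj {d : ℕ} {w w' : WordTriple β n d} (σ : Equiv.Perm (Fin d)) :
    wAct w σ = wAct w' σ ↔ w = w' := by
  refine ⟨fun h => ?_, fun h => h ▸ rfl⟩
  have := congrArg (fun z => wAct z σ⁻¹) h
  simpa [wAct_mul, wAct_one] using this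

theorem act_bas {P : GoodPair 𝕜 A β} (D : Tower 𝕜 A β n T P) {d : ℕ} (σ : Equiv.Perm (Fin d))
    (w : WordTriple β n d) :
    D.act σ (D.bas d w) = ((-1 : ℤ) ^ sgW P σ w) • D.bas d (wAct w σ) := by
  obtain ⟨b, r, s⟩ := w
  rw [D.bas_eq, D.act_X _ _ _ _ (fun k => bas_homog P _)]
  simp only [wAct]
  rw [D.bas_eq]; rfl

theorem repr_act {P : GoodPair 𝕜 A β} (D : Tower 𝕜 A β n T P) {d : ℕ} (σ : Equiv.Perm (Fin d))
    (w : WordTriple β n d) (x : T d) :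
    (D.bas d).repr (D.act σ x) (wAct w σ) = ((-1 : ℤ) ^ sgW P σ w) • (D.bas d).repr x w := by
  have : ((D.bas d).coord (wAct w σ)) ∘ₗ D.act σ = ((-1 : ℤ) ^ sgW P σ w) • (D.bas d).coord w := by
    refine (D.bas d).ext fun w' => ?_
    simp only [LinearMap.comp_apply, act_bas, map_zsmul, LinearMap.smul_apply,
      Module.Basis.coord_apply, Module.Basis.repr_self, Finsupp.single_apply, wAct_inj]
    split_ifs with h
    · rw [h]
    · simp
  exact congrArg (fun f => f x) this

theorem repr_inv {P : GoodPair 𝕜 A β} (D : Tower 𝕜 A β n T P) {d : ℕ} (σ : Equiv.Perm (Fin d))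
    (w : WordTriple β n d) {x : T d} (hx : x ∈ SchurS D d) :
    (D.bas d).repr x (wAct w σ) = ((-1 : ℤ) ^ sgW P σ w) • (D.bas d).repr x w := by
  rw [← repr_act, hx σ]

theorem repr_inv_ne {P : GoodPair 𝕜 A β} (D : Tower 𝕜 A β n T P) {d : ℕ} (σ : Equiv.Perm (Fin d))
    (w : WordTriple β n d) {x : T d} (hx : x ∈ SchurS D d) :
    (D.bas d).repr x (wAct w σ) ≠ 0 ↔ (D.bas d).repr x w ≠ 0 := by
  rw [repr_inv D σ w hx]
  rcases neg_one_pow_eq_or ℤ (sgW P σ w) with h | h <;> simp [h]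

/-- a swap of two odd positions is odd -/
theorem sgnc_swap (od : Submodule 𝕜 A) {d : ℕ} (a : Fin d → A) {k l : Fin d} (hkl : k < l)
    (hk : a k ∈ od) (hl : a l ∈ od) : Odd (sgnc od (Equiv.swap k l) a) := by
  set M : Finset (Fin d) := univ.filter fun m => k < m ∧ m < l ∧ a m ∈ od
  have key : (univ.filter fun kl' : Fin d × Fin d =>
      kl'.1 < kl'.2 ∧ (Equiv.swap k l)⁻¹ kl'.2 < (Equiv.swap k l)⁻¹ kl'.1 ∧ a kl'.1 ∈ od
        ∧ a kl'.2 ∈ od) =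
      insert (k, l) (M.image (fun m => (k, m)) ∪ M.image (fun m => (m, l))) := by
    ext ⟨i, j⟩
    simp only [mem_filter, mem_univ, true_and, mem_insert, mem_union, mem_image, Prod.mk.injEq, M]
    simp only [Equiv.swap_inv, Equiv.swap_apply_def]
    constructor
    · rintro ⟨h1, h2, h3, h4⟩
      split_ifs at h2 with h5 h6 h7 h8 h9 h10 h11
      all_goals grind
    · rintro (⟨rfl, rfl⟩ | ⟨m, ⟨h1, h2, h3⟩, rfl, rfl⟩ | ⟨m, ⟨h1, h2, h3⟩, rfl, rfl⟩)
      all_goals grind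
  unfold sgnc
  rw [key, card_insert_of_notMem, card_union_of_disjoint, card_image_of_injective,
    card_image_of_injective]
  · exact ⟨M.card, by ring⟩
  · intro x y h; simpa using h
  · intro x y h; simpa using h
  · rw [Finset.disjoint_left]
    simp only [mem_image, M, mem_filter]
    grind
  · simp only [mem_union, mem_image, M, mem_filter]
    grind

theorem wAct_eq_iff {d : ℕ} (w w' : WordTriple β n d) (σ : Equiv.Perm (Fin d)) :
    wAct w σ = w' ↔ ∀ k, ((w.1 (σ k), w.2.1 (σ k), w.2.2 (σ k)) : β × Fin n × Fin n)
      = (w'.1 k, w'.2.1 k, w'.2.2 k) := by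
  constructor
  · rintro rfl k; rfl
  · intro h
    refine Prod.ext (funext fun k => ?_) (Prod.ext (funext fun k => ?_) (funext fun k => ?_))
    · exact congrArg (fun z => z.1) (h k)
    · exact congrArg (fun z => z.2.1) (h k)
    · exact congrArg (fun z => z.2.2) (h k)

theorem triB_of_ne [IsDomain 𝕜] [CharZero 𝕜] {P : GoodPair 𝕜 A β} (D : Tower 𝕜 A β n T P) {d : ℕ}
    (w : WordTriple β n d) {x : T d} (hx : x ∈ SchurS D d) (h : (D.bas d).repr x w ≠ 0) :
    IsTriB P w.1 w.2.1 w.2.2 := by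
  have main : ∀ k l : Fin d, k < l →
      ((w.1 k, w.2.1 k, w.2.2 k) : β × Fin n × Fin n) = (w.1 l, w.2.1 l, w.2.2 l) →
      P.part (w.1 k) ≠ 2 := by
    intro k l hkl he hp
    have h1 : wAct w (Equiv.swap k l) = w := by
      rw [wAct_eq_iff]
      intro j
      rw [Equiv.swap_apply_def]
      split_ifs with h1 h2
      · rw [h1, he]
      · rw [h2, he]
      · rfl
    have h2 := repr_inv D (Equiv.swap k l) w hx
    have e1 : w.1 k = w.1 l := congrArg (fun z => z.1) he
    have h3 : Odd (sgW P (Equiv.swap k l) w) :=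
      sgnc_swap P.od _ hkl (P.bas_mem_od _ hp) (P.bas_mem_od _ (e1 ▸ hp))
    rw [h1, h3.neg_one_pow, neg_smul, one_smul] at h2
    exact h (self_eq_neg.mp h2)
  intro k l hkl he
  rcases lt_or_gt_of_ne hkl with h' | h'
  · exact main k l h' he
  · have e1 : w.1 k = w.1 l := congrArg (fun z => z.1) he
    rw [e1]
    exact main l k h' he.symm
theorem ang_even {od : Submodule 𝕜 A} (ord : LinearOrder (A × Fin n × Fin n)) {d : ℕ}
    (a : Fin d → A) (r s : Fin d → Fin n) (σ : Equiv.Perm (Fin d))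
    (hd : ∀ k l, k ≠ l → a k ∈ od → (a k, r k, s k) ≠ (a l, r l, s l)) :
    Even (ang od ord a r s + sgnc od σ a + ang od ord (a ∘ σ) (r ∘ σ) (s ∘ σ)) := by
  have h1 : ang od ord (a ∘ σ) (r ∘ σ) (s ∘ σ) = (univ.filter fun kl : Fin d × Fin d =>
      kl.1 < kl.2 ∧ a kl.1 ∈ od ∧ a kl.2 ∈ od ∧
      (ord.lt (a kl.2, r kl.2, s kl.2) (a kl.1, r kl.1, s kl.1) ↔
        ¬ (σ⁻¹ kl.2 < σ⁻¹ kl.1))).card := by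
    unfold ang
    have hss : ∀ k, σ (σ⁻¹ k) = k := fun k => σ.apply_symm_apply k
    have flip : ∀ k l, k ≠ l → a k ∈ od → (¬ ord.lt (a k, r k, s k) (a l, r l, s l) ↔
        ord.lt (a l, r l, s l) (a k, r k, s k)) := by
      intro k l hkl hk
      have := hd k l hkl hk
      constructor
      · intro h
        have h' := @not_lt _ ord _ _ |>.mp h
        exact @lt_of_le_of_ne _ ord.toPartialOrder _ _ h' this.symm
      · intro h h'
        exact @lt_asymm _ ord.toPreorder _ _ h h'
    refine Finset.card_bij'
      (fun kl _ => if σ kl.1 < σ kl.2 then (σ kl.1, σ kl.2) else (σ kl.2, σ kl.1))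
      (fun kl _ => if σ⁻¹ kl.1 < σ⁻¹ kl.2 then (σ⁻¹ kl.1, σ⁻¹ kl.2)
        else (σ⁻¹ kl.2, σ⁻¹ kl.1)) ?_ ?_ ?_ ?_
    · rintro ⟨i, j⟩ h
      simp only [mem_filter, mem_univ, true_and, Function.comp] at h ⊢
      obtain ⟨h1, h2, h3, h4⟩ := h
      have hne : σ i ≠ σ j := fun e => h1.ne (σ.injective e)
      split_ifs with hij
      · refine ⟨hij, h2, h3, ?_⟩
        simp [h4, h1.le]
      · have hji : σ j < σ i := lt_of_le_of_ne (not_lt.mp hij) hne.symm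
        refine ⟨hji, h3, h2, ?_⟩
        have : ¬ ord.lt (a (σ i), r (σ i), s (σ i)) (a (σ j), r (σ j), s (σ j)) :=
          (flip _ _ hne h2).mpr h4
        simp [this, h1]
    · rintro ⟨k, l⟩ h
      simp only [mem_filter, mem_univ, true_and, Function.comp] at h ⊢
      obtain ⟨h1, h2, h3, h4⟩ := h
      have hne : σ⁻¹ k ≠ σ⁻¹ l := fun e => h1.ne (σ⁻¹.injective e)
      split_ifs with hkl
      · refine ⟨hkl, ?_⟩
        simp only [hss]
        exact ⟨h2, h3, h4.mpr (not_lt.mpr hkl.le)⟩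
      · have hlk : σ⁻¹ l < σ⁻¹ k := lt_of_le_of_ne (not_lt.mp hkl) hne.symm
        refine ⟨hlk, ?_⟩
        simp only [hss]
        refine ⟨h3, h2, (flip l k h1.ne' h3).mp ?_⟩
        intro h
        exact (h4.mp h) hlk
    · rintro ⟨i, j⟩ h
      simp only [mem_filter, mem_univ, true_and, Function.comp] at h
      by_cases hij : σ i < σ j
      · simp [hij, h.1]
      · simp [hij, h.1.le]
    · rintro ⟨k, l⟩ h
      simp only [mem_filter, mem_univ, true_and] at h
      by_cases hij : σ⁻¹ k < σ⁻¹ l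
      · simp only [hij, if_true, hss, h.1]
      · simp only [hij, if_false, hss, not_lt.mpr h.1.le]
  rw [h1]
  unfold ang sgnc
  simp only [Finset.card_filter, ← Finset.sum_add_distrib]
  refine Finset.even_sum _ fun kl _ => ?_
  by_cases c1 : kl.1 < kl.2 <;> by_cases c2 : a kl.1 ∈ od <;> by_cases c3 : a kl.2 ∈ od <;>
  by_cases c4 : ord.lt (a kl.2, r kl.2, s kl.2) (a kl.1, r kl.1, s kl.1) <;>
  by_cases c5 : σ⁻¹ kl.2 < σ⁻¹ kl.1 <;>
  simp only [c1, c2, c3, c4, c5, and_true, and_false, if_true, if_false, not_true,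
    not_false_iff, iff_true, iff_false] <;> decide

/-- `ang` of a basis triple -/
def angW (P : GoodPair 𝕜 A β) (ord : LinearOrder (A × Fin n × Fin n)) {d : ℕ}
    (w : WordTriple β n d) : ℕ :=
  ang P.od ord (fun k => P.bas (w.1 k)) w.2.1 w.2.2

/-- the orbit of a triple -/
def orbW {d : ℕ} (u : WordTriple β n d) : Finset (WordTriple β n d) :=
  univ.image fun σ => wAct u σ

theorem mem_orbW {d : ℕ} (u w : WordTriple β n d) : w ∈ orbW u ↔ ∃ σ, wAct u σ = w := by
  simp [orbW]

theorem wAct_mem_orbW {d : ℕ} (u w : WordTriple β n d) (σ : Equiv.Perm (Fin d)) :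
    wAct w σ ∈ orbW u ↔ w ∈ orbW u := by
  rw [mem_orbW, mem_orbW]
  constructor
  · rintro ⟨τ, h⟩
    refine ⟨τ * σ⁻¹, ?_⟩
    rw [← wAct_mul, h, wAct_mul, mul_inv_cancel, wAct_one]
  · rintro ⟨τ, rfl⟩
    exact ⟨τ * σ, rfl⟩

theorem triB_act {P : GoodPair 𝕜 A β} {d : ℕ} {w : WordTriple β n d} (σ : Equiv.Perm (Fin d))
    (h : IsTriB P w.1 w.2.1 w.2.2) :
    IsTriB P (wAct w σ).1 (wAct w σ).2.1 (wAct w σ).2.2 := by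
  intro k l hkl he
  exact h (σ k) (σ l) (fun e => hkl (σ.injective e)) he

theorem angW_sign [Nontrivial 𝕜] {P : GoodPair 𝕜 A β} (ord : LinearOrder (A × Fin n × Fin n))
    {d : ℕ} {w : WordTriple β n d} (σ : Equiv.Perm (Fin d)) (h : IsTriB P w.1 w.2.1 w.2.2) :
    Even (angW P ord w + sgW P σ w + angW P ord (wAct w σ)) := by
  refine ang_even ord _ _ _ σ ?_
  intro k l hkl hk he
  simp only [Prod.mk.injEq] at he
  refine h k l hkl ?_ ((bas_od_iff P _).mp hk)
  simp only [Prod.mk.injEq]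
  exact ⟨P.bas.injective he.1, he.2⟩

theorem xiB_eq [Nontrivial 𝕜] {P : GoodPair 𝕜 A β} (D : Tower 𝕜 A β n T P)
    (ord : LinearOrder (A × Fin n × Fin n)) {d : ℕ} (u : WordTriple β n d) :
    xiB D ord u.1 u.2.1 u.2.2
      = ∑ w ∈ orbW u, ((-1 : ℤ) ^ (angW P ord u + angW P ord w)) • D.bas d w := by
  unfold xiB xiH
  have himg : (univ.image fun σ : Equiv.Perm (Fin d) =>
      ((fun k => P.bas (u.1 k)) ∘ σ, u.2.1 ∘ σ, u.2.2 ∘ σ))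
      = (orbW u).image (fun w : WordTriple β n d => (fun k => P.bas (w.1 k), w.2.1, w.2.2)) := by
    rw [orbW, Finset.image_image]; rfl
  rw [himg, Finset.sum_image]
  · refine Finset.sum_congr rfl fun w _ => ?_
    rw [show D.bas d w = D.bas d (w.1, w.2.1, w.2.2) from rfl, D.bas_eq]; rfl
  · intro w _ w' _ h
    simp only [Prod.mk.injEq] at h
    refine Prod.ext (funext fun k => P.bas.injective (congrFun h.1 k)) (Prod.ext h.2.1 h.2.2)

theorem repr_xiB [Nontrivial 𝕜] {P : GoodPair 𝕜 A β} (D : Tower 𝕜 A β n T P)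
    (ord : LinearOrder (A × Fin n × Fin n)) {d : ℕ} (u w : WordTriple β n d) :
    (D.bas d).repr (xiB D ord u.1 u.2.1 u.2.2) w
      = if w ∈ orbW u then ((-1 : 𝕜) ^ (angW P ord u + angW P ord w)) else 0 := by
  rw [xiB_eq, map_sum, Finsupp.finsetSum_apply]
  simp only [map_zsmul, Finsupp.smul_apply, Module.Basis.repr_self, Finsupp.single_apply]
  simp only [smul_ite, smul_zero, Finset.sum_ite_eq', zsmul_eq_mul, mul_one]
  push_cast
  rfl

theorem xiB_mem [Nontrivial 𝕜] {P : GoodPair 𝕜 A β} (D : Tower 𝕜 A β n T P)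
    (ord : LinearOrder (A × Fin n × Fin n)) {d : ℕ} (u : WordTriple β n d)
    (hu : IsTriB P u.1 u.2.1 u.2.2) : xiB D ord u.1 u.2.1 u.2.2 ∈ SchurS D d := by
  intro σ
  refine (D.bas d).ext_elem fun w' => ?_
  obtain ⟨w, rfl⟩ : ∃ w, wAct w σ = w' := ⟨wAct w' σ⁻¹, by simp [wAct_mul, wAct_one]⟩
  rw [repr_act, repr_xiB, repr_xiB]
  simp only [wAct_mem_orbW]
  split_ifs with h
  · obtain ⟨τ, rfl⟩ := (mem_orbW _ _).mp h
    have := angW_sign ord σ (triB_act τ hu)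
    rw [zsmul_eq_mul]
    push_cast
    rw [← pow_add]
    apply neg_one_pow_congr
    grind
  · simp

theorem facW_act (P : GoodPair 𝕜 A β) {d : ℕ} (w : WordTriple β n d) (σ : Equiv.Perm (Fin d)) :
    facW P (wAct w σ) = facW P w := by
  unfold facW facSel
  have h1 : (univ.image fun k => (((wAct w σ).1 k, (wAct w σ).2.1 k, (wAct w σ).2.2 k) :
      β × Fin n × Fin n)) = univ.image fun k => ((w.1 k, w.2.1 k, w.2.2 k) : β × Fin n × Fin n) := by
    ext x
    simp only [mem_image, mem_univ, true_and, wAct, Function.comp]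
    constructor
    · rintro ⟨k, h⟩; exact ⟨σ k, h⟩
    · rintro ⟨k, h⟩; exact ⟨σ⁻¹ k, by simpa using h⟩
  rw [h1]
  refine Finset.prod_congr rfl fun x _ => ?_
  congr 1
  unfold mco
  refine Finset.card_bij (fun k _ => σ k) ?_ ?_ ?_
  · intro k hk; rw [mem_filter] at hk ⊢; exact ⟨mem_univ _, hk.2⟩
  · intro k _ l _ h; exact σ.injective h
  · intro k hk; exact ⟨σ⁻¹ k, by
      rw [mem_filter] at hk ⊢
      refine ⟨mem_univ _, ?_⟩
      simpa [wAct] using hk.2, by simp⟩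

/-- the intrinsic description of `SchurT` -/
def Good {P : GoodPair 𝕜 A β} (D : Tower 𝕜 A β n T P) (d : ℕ) (x : T d) : Prop :=
  x ∈ SchurS D d ∧ ∀ w : WordTriple β n d, ((facW P w : ℕ) : 𝕜) ∣ (D.bas d).repr x w

theorem good_eta [Nontrivial 𝕜] {P : GoodPair 𝕜 A β} (D : Tower 𝕜 A β n T P)
    (ord : LinearOrder (A × Fin n × Fin n)) {d : ℕ} (u : WordTriple β n d)
    (hu : IsTriB P u.1 u.2.1 u.2.2) : Good D d (eta D ord u.1 u.2.1 u.2.2) := by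
  refine ⟨nsmul_mem (xiB_mem D ord u hu) _, fun w => ?_⟩
  unfold eta
  rw [map_nsmul, Finsupp.smul_apply, repr_xiB, nsmul_eq_mul]
  split_ifs with h
  · obtain ⟨σ, rfl⟩ := (mem_orbW _ _).mp h
    rw [facW_act]
    exact dvd_mul_right _ _
  · simp

theorem good_smul_add {P : GoodPair 𝕜 A β} (D : Tower 𝕜 A β n T P) {d : ℕ} {x y : T d} (c : 𝕜)
    (hx : Good D d x) (hy : Good D d y) : Good D d (x + c • y) := by
  refine ⟨add_mem hx.1 (Submodule.smul_mem _ _ hy.1), fun w => ?_⟩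
  rw [map_add, map_smul, Finsupp.add_apply, Finsupp.smul_apply, smul_eq_mul]
  exact dvd_add (hx.2 w) (Dvd.dvd.mul_left (hy.2 w) _)

theorem good_zero {P : GoodPair 𝕜 A β} (D : Tower 𝕜 A β n T P) {d : ℕ} : Good D d (0 : T d) :=
  ⟨zero_mem _, fun w => by simp⟩

theorem good_of_mem [Nontrivial 𝕜] {P : GoodPair 𝕜 A β} (D : Tower 𝕜 A β n T P)
    (ord : LinearOrder (A × Fin n × Fin n)) {d : ℕ} {x : T d} (hx : x ∈ SchurT D ord d) :
    Good D d x := by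
  unfold SchurT at hx
  induction hx using Submodule.span_induction with
  | mem x h => obtain ⟨b, r, s, h, rfl⟩ := h; exact good_eta D ord (b, r, s) h
  | zero => exact good_zero D
  | add x y _ _ h1 h2 => simpa using good_smul_add D 1 h1 h2
  | smul c x _ h => simpa using good_smul_add D c (good_zero D) h

theorem mem_of_good [IsDomain 𝕜] [CharZero 𝕜] {P : GoodPair 𝕜 A β} (D : Tower 𝕜 A β n T P)
    (ord : LinearOrder (A × Fin n × Fin n)) {d : ℕ} :
    ∀ (N : ℕ) (x : T d), ((D.bas d).repr x).support.card ≤ N → Good D d x →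
      x ∈ SchurT D ord d := by
  intro N
  induction N with
  | zero =>
    intro x hN _
    have : (D.bas d).repr x = 0 := by simpa using hN
    have : x = 0 := by simpa using this
    rw [this]; exact zero_mem _
  | succ N ih =>
    intro x hN hx
    by_cases h0 : ((D.bas d).repr x).support.card ≤ N
    · exact ih x h0 hx
    have hne : ((D.bas d).repr x).support.Nonempty := by
      rw [← Finset.card_pos]; omega
    obtain ⟨u, hu⟩ := hne
    have hu' := Finsupp.mem_support_iff.mp hu
    have htri := triB_of_ne D u hx.1 hu'
    obtain ⟨c, hc⟩ := hx.2 u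
    have hg := good_smul_add D (-c) hx (good_eta D ord u htri)
    have hmem : eta D ord u.1 u.2.1 u.2.2 ∈ SchurT D ord d :=
      Submodule.subset_span ⟨u.1, u.2.1, u.2.2, htri, rfl⟩
    have hre : ∀ w, (D.bas d).repr (eta D ord u.1 u.2.1 u.2.2) w = (facW P u : 𝕜) *
        if w ∈ orbW u then ((-1 : 𝕜) ^ (angW P ord u + angW P ord w)) else 0 := by
      intro w
      rw [← repr_xiB D ord u w, eta, map_nsmul, Finsupp.smul_apply, nsmul_eq_mul]; rfl
    have hlt : ((D.bas d).repr (x + (-c) • eta D ord u.1 u.2.1 u.2.2)).support.card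
        < ((D.bas d).repr x).support.card := by
      refine Finset.card_lt_card ⟨?_, ?_⟩
      · intro w hw
        rw [Finsupp.mem_support_iff] at hw ⊢
        by_cases hwo : w ∈ orbW u
        · obtain ⟨σ, rfl⟩ := (mem_orbW _ _).mp hwo
          exact (repr_inv_ne D σ u hx.1).mpr hu'
        · intro h
          apply hw
          rw [map_add, map_smul, Finsupp.add_apply, Finsupp.smul_apply, hre, if_neg hwo, h]
          simp
      · intro hsub
        have := Finsupp.mem_support_iff.mp (hsub hu)
        apply this
        have huo : u ∈ orbW u := (mem_orbW _ _).mpr ⟨1, rfl⟩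
        rw [map_add, map_smul, Finsupp.add_apply, Finsupp.smul_apply, hre, if_pos huo, hc,
          Even.neg_one_pow ⟨_, rfl⟩, smul_eq_mul]
        ring
    have := ih _ (by omega) hg
    have h2 := add_mem this (Submodule.smul_mem _ c hmem)
    simpa using h2
/-- the group permuting equal `𝔠`-letters -/
def GW (P : GoodPair 𝕜 A β) {d : ℕ} (w : WordTriple β n d) : Subgroup (Equiv.Perm (Fin d)) where
  carrier := {σ | wAct w σ = w ∧ ∀ k, P.part (w.1 k) ≠ 1 → σ k = k}
  one_mem' := ⟨rfl, fun _ _ => rfl⟩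
  mul_mem' := by
    rintro σ τ ⟨h1, h2⟩ ⟨h3, h4⟩
    refine ⟨?_, fun k hk => ?_⟩
    · rw [← wAct_mul, h1, h3]
    · rw [Equiv.Perm.mul_apply, h4 k hk, h2 k hk]
  inv_mem' := by
    rintro σ ⟨h1, h2⟩
    refine ⟨?_, fun k hk => ?_⟩
    · conv_lhs => rw [← h1]
      rw [wAct_mul, mul_inv_cancel, wAct_one]
    · rw [Equiv.Perm.inv_eq_iff_eq, h2 k hk]

theorem mem_GW (P : GoodPair 𝕜 A β) {d : ℕ} (w : WordTriple β n d) (σ : Equiv.Perm (Fin d)) :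
    σ ∈ GW P w ↔ wAct w σ = w ∧ ∀ k, P.part (w.1 k) ≠ 1 → σ k = k := Iff.rfl

/-- labels whose stabilizer is `GW` -/
def labW (P : GoodPair 𝕜 A β) {d : ℕ} (w : WordTriple β n d) (k : Fin d) :
    (β × Fin n × Fin n) ⊕ Fin d :=
  if P.part (w.1 k) = 1 then Sum.inl (w.1 k, w.2.1 k, w.2.2 k) else Sum.inr k

theorem mem_GW_iff_lab (P : GoodPair 𝕜 A β) {d : ℕ} (w : WordTriple β n d)
    (σ : Equiv.Perm (Fin d)) : labW P w ∘ σ = labW P w ↔ σ ∈ GW P w := by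
  rw [mem_GW, wAct_eq_iff, funext_iff]
  constructor
  · intro h
    refine ⟨fun k => ?_, fun k hk => ?_⟩
    · have := h k
      unfold labW at this
      simp only [Function.comp] at this
      split_ifs at this with h1 h2
      · exact Sum.inl_injective this
      · rw [Sum.inr_injective this]
    · have := h k
      unfold labW at this
      simp only [Function.comp, if_neg hk] at this
      split_ifs at this with h1
      exact Sum.inr_injective this
  · rintro ⟨h1, h2⟩ k
    have e : w.1 (σ k) = w.1 k := congrArg (fun z => z.1) (h1 k)
    unfold labW
    simp only [Function.comp, e]
    split_ifs with h
    · rw [← h1 k, e]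
    · rw [h2 k h]

theorem card_GW (P : GoodPair 𝕜 A β) {d : ℕ} (w : WordTriple β n d) :
    Nat.card (GW P w) = facW P w := by
  have h1 : Nat.card (GW P w) = Nat.card {σ : Equiv.Perm (Fin d) // labW P w ∘ σ = labW P w} :=
    Nat.card_congr (Equiv.subtypeEquivRight fun σ => (mem_GW_iff_lab P w σ).symm)
  rw [h1, Nat.card_eq_fintype_card, DomMulAct.stabilizer_card']
  unfold facW facSel
  set S := (univ.image fun k => ((w.1 k, w.2.1 k, w.2.2 k) : β × Fin n × Fin n)).filter
    fun w => P.part w.1 = 1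
  have hsub : S.map Function.Embedding.inl ⊆ univ.image (labW P w) := by
    intro x hx
    simp only [S, mem_map, mem_filter, mem_image, mem_univ, true_and] at hx
    obtain ⟨y, ⟨⟨k, rfl⟩, hk⟩, rfl⟩ := hx
    refine mem_image.mpr ⟨k, mem_univ _, ?_⟩
    unfold labW
    rw [if_pos hk]; rfl
  rw [← Finset.prod_subset hsub, Finset.prod_map]
  · refine Finset.prod_congr (by ext y; simp only [S, mem_filter]) fun y hy => ?_
    congr 1
    unfold mco
    rw [Fintype.card_subtype]
    congr 1
    ext k
    have hy1 : P.part y.1 = 1 := by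
      simp only [mem_filter] at hy
      exact hy.2
    rw [mem_filter, mem_filter]
    refine and_congr_right fun _ => ?_
    unfold labW
    constructor
    · intro h
      split_ifs at h with h'
      · exact Sum.inl_injective h
      · exact absurd h (by simp)
    · rintro rfl
      rw [if_pos hy1]; rfl
  · intro x hx hx'
    obtain ⟨k, -, rfl⟩ := mem_image.mp hx
    have hk : P.part (w.1 k) ≠ 1 := by
      intro hk
      apply hx'
      refine mem_map.mpr ⟨(w.1 k, w.2.1 k, w.2.2 k), mem_filter.mpr
        ⟨mem_image.mpr ⟨k, mem_univ _, rfl⟩, hk⟩, ?_⟩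
      unfold labW
      rw [if_pos hk]; rfl
    have : Fintype.card {a // labW P w a = labW P w k} ≤ 1 := by
      rw [Fintype.card_le_one_iff_subsingleton]
      have : ∀ a, labW P w a = labW P w k → a = k := by
        intro a ha
        unfold labW at ha
        rw [if_neg hk] at ha
        split_ifs at ha with h
        exact Sum.inr_injective ha
      exact ⟨fun a b => Subtype.ext ((this _ a.2).trans (this _ b.2).symm)⟩
    exact Nat.factorial_eq_one.mpr this

theorem card_dvd_of_orbits {Γ ι : Type} [Group Γ] [Finite Γ] [MulAction Γ ι] (f : ι → 𝕜)
    (hf : ∀ (g : Γ) i, f (g • i) = f i) :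
    ∀ (N : ℕ) (S : Finset ι), S.card ≤ N → (∀ (g : Γ), ∀ i ∈ S, g • i ∈ S) →
      (∀ i ∈ S, ((Nat.card (MulAction.stabilizer Γ i) : ℕ) : 𝕜) ∣ f i) →
      ((Nat.card Γ : ℕ) : 𝕜) ∣ ∑ i ∈ S, f i := by
  have := Fintype.ofFinite Γ
  intro N
  induction N with
  | zero =>
    intro S hN _ _
    have : S = ∅ := by simpa using hN
    simp [this]
  | succ N ih =>
    intro S hN hS hst
    rcases S.eq_empty_or_nonempty with rfl | ⟨i, hi⟩
    · simp
    set O : Finset ι := univ.image fun g : Γ => g • i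
    have hO : O ⊆ S := by
      intro j hj
      obtain ⟨g, -, rfl⟩ := mem_image.mp hj
      exact hS g i hi
    have hiO : i ∈ O := mem_image.mpr ⟨1, mem_univ _, one_smul _ _⟩
    rw [← Finset.sum_sdiff hO]
    refine dvd_add (ih _ ?_ ?_ ?_) ?_
    · have : (S \ O).card < S.card := Finset.card_lt_card
        ⟨sdiff_subset, fun h => (mem_sdiff.mp (h hi)).2 hiO⟩
      omega
    · intro g j hj
      rw [mem_sdiff] at hj ⊢
      refine ⟨hS g j hj.1, fun h => hj.2 ?_⟩
      obtain ⟨g', -, h'⟩ := mem_image.mp h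
      refine mem_image.mpr ⟨g⁻¹ * g', mem_univ _, ?_⟩
      rw [mul_smul, h', inv_smul_smul]
    · intro j hj
      exact hst j (mem_sdiff.mp hj).1
    · have hc : ∀ j ∈ O, f j = f i := by
        intro j hj
        obtain ⟨g, -, rfl⟩ := mem_image.mp hj
        exact hf g i
      rw [Finset.sum_congr rfl hc, Finset.sum_const, nsmul_eq_mul]
      have h1 : Nat.card (MulAction.orbit Γ i) = O.card := by
        have : MulAction.orbit Γ i = (O : Set ι) := by
          ext j; simp [O, MulAction.mem_orbit_iff]
        rw [Nat.card_coe_set_eq, this, Set.ncard_coe_finset]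
      have h2 : O.card * Nat.card (MulAction.stabilizer Γ i) = Nat.card Γ := by
        rw [← h1, ← Nat.card_prod]
        exact Nat.card_congr (MulAction.orbitProdStabilizerEquivGroup Γ i)
      rw [← h2]
      push_cast
      exact mul_dvd_mul_left _ (hst i hi)

theorem card_dvd_mul_of_restrict {α : Type} [Fintype α] (H Gu Gv : Subgroup (Equiv.Perm α))
    (C : α → Prop) (hC : ∀ h ∈ H, ∀ a, C (h a) ↔ C a)
    (h1 : ∀ h (_ : h ∈ H), ∀ g : Equiv.Perm α, (∀ a, C a → g a = h a) → (∀ a, ¬ C a → g a = a) →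
      g ∈ Gu)
    (h2 : ∀ h ∈ H, (∀ a, C a → h a = a) → h ∈ Gv) :
    Nat.card H ∣ Nat.card Gu * Nat.card Gv := by
  let φ : H →* Equiv.Perm {a // C a} :=
    { toFun := fun h => h.1.subtypePerm (fun a => hC h.1 h.2 a)
      map_one' := by ext; rfl
      map_mul' := fun x y => by ext; rfl }
  let ψ : H →* Equiv.Perm α := (Equiv.Perm.ofSubtype).comp φ
  have e : Nat.card H = Nat.card ψ.ker * Nat.card ψ.range := by
    rw [← ψ.ker.card_mul_index, Subgroup.index_ker]
  have hψ1 : ∀ (h : H) a, C a → ψ h a = h.1 a := by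
    intro h a ha
    simp only [ψ, MonoidHom.comp_apply]
    rw [Equiv.Perm.ofSubtype_apply_of_mem _ ha]; rfl
  have hψ2 : ∀ (h : H) a, ¬ C a → ψ h a = a := by
    intro h a ha
    simp only [ψ, MonoidHom.comp_apply]
    rw [Equiv.Perm.ofSubtype_apply_of_not_mem _ ha]
  have d1 : Nat.card ψ.range ∣ Nat.card Gu := by
    refine Subgroup.card_dvd_of_le ?_
    rintro g ⟨h, rfl⟩
    exact h1 h.1 h.2 _ (hψ1 h) (hψ2 h)
  have d2 : Nat.card ψ.ker ∣ Nat.card Gv := by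
    rw [← Subgroup.card_map_of_injective (f := H.subtype) H.subtype_injective]
    refine Subgroup.card_dvd_of_le ?_
    rintro g ⟨h, hk, rfl⟩
    refine h2 h.1 h.2 fun a ha => ?_
    rw [← hψ1 h a ha, MonoidHom.mem_ker.mp hk]; rfl
  rw [e, mul_comm]
  exact mul_dvd_mul d1 d2
/-- pure tensors as a multilinear map -/
def Xmul {P : GoodPair 𝕜 A β} (D : Tower 𝕜 A β n T P) {e : ℕ} (r s : Fin e → Fin n) :
    MultilinearMap 𝕜 (fun _ : Fin e => A) (T e) where
  toFun a := D.X a r s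
  map_update_add' := by
    intro inst a k x y
    rw [Subsingleton.elim inst (fun a b => instDecidableEqFin e a b)]
    exact D.X_update_add a r s k x y
  map_update_smul' := by
    intro inst a k c x
    rw [Subsingleton.elim inst (fun a b => instDecidableEqFin e a b)]
    exact D.X_update_smul a r s k c x

theorem repr_X {P : GoodPair 𝕜 A β} (D : Tower 𝕜 A β n T P) {e : ℕ} (a : Fin e → A)
    (r s : Fin e → Fin n) (w : WordTriple β n e) :
    (D.bas e).repr (D.X a r s) w
      = (if r = w.2.1 ∧ s = w.2.2 then 1 else 0) * ∏ j, P.bas.repr (a j) (w.1 j) := by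
  have : ((D.bas e).coord w).compMultilinearMap (Xmul D r s)
      = (if r = w.2.1 ∧ s = w.2.2 then (1 : 𝕜) else 0) •
        (MultilinearMap.mkPiAlgebra 𝕜 (Fin e) 𝕜).compLinearMap
          (fun j => P.bas.coord (w.1 j)) := by
    refine Module.Basis.ext_multilinear (fun _ => P.bas) fun b => ?_
    simp only [LinearMap.compMultilinearMap_apply, MultilinearMap.smul_apply,
      MultilinearMap.compLinearMap_apply, MultilinearMap.mkPiAlgebra_apply,
      Module.Basis.coord_apply, Module.Basis.repr_self, smul_eq_mul]
    change (D.bas e).repr (D.X (fun i => P.bas (b i)) r s) w = _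
    rw [← D.bas_eq, Module.Basis.repr_self, Finsupp.single_apply]
    by_cases hb : b = w.1
    · subst hb
      simp [Prod.ext_iff]
    · have h1 : ¬ ((b, r, s) = w) := fun h => hb (congrArg (fun z => z.1) h)
      rw [if_neg h1]
      obtain ⟨k, hk⟩ := Function.ne_iff.mp hb
      rw [Finset.prod_eq_zero (mem_univ k), mul_zero]
      simp [Finsupp.single_apply, hk]
  exact congrArg (fun f => f a) this

theorem smul_bas {P : GoodPair 𝕜 A β} (D : Tower 𝕜 A β n T P) {d : ℕ} (u : WordTriple β n d)
    (k : Fin d) (c : 𝕜) : c • D.bas d u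
      = D.X (Function.update (fun j => P.bas (u.1 j)) k (c • P.bas (u.1 k))) u.2.1 u.2.2 := by
  rw [D.X_update_smul, Function.update_eq_self]
  congr 1
  exact D.bas_eq d u.1 u.2.1 u.2.2

theorem homog_update (P : GoodPair 𝕜 A β) {d : ℕ} (u : WordTriple β n d)
    (k : Fin d) (c : 𝕜) (j : Fin d) :
    Homog P (Function.update (fun j => P.bas (u.1 j)) k (c • P.bas (u.1 k)) j) := by
  rw [Function.update_apply]
  split_ifs with h
  · rcases bas_homog P (u.1 k) with h | h
    · exact Or.inl (Submodule.smul_mem _ _ h)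
    · exact Or.inr (Submodule.smul_mem _ _ h)
  · exact bas_homog P _

theorem repr_mul_vanish {P : GoodPair 𝕜 A β} (D : Tower 𝕜 A β n T P) {d : ℕ}
    (u v w : WordTriple β n d) (k : Fin d) (c c' : 𝕜) (hw : P.part (w.1 k) = 1)
    (hu : P.part (u.1 k) = 0) (hv : P.part (v.1 k) = 0) :
    (D.bas d).repr ((c • D.bas d u) * (c' • D.bas d v)) w = 0 := by
  rw [smul_bas D u k, smul_bas D v k, D.X_mul _ _ _ _ _ _ (homog_update P u k c)
    (homog_update P v k c')]
  split_ifs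
  · rw [map_zsmul, Finsupp.smul_apply, repr_X, Finset.prod_eq_zero (mem_univ k)]
    · simp
    · refine repr_aa_zero P ?_ hw
      simp only [Function.update_self]
      exact P.aa_mul _ (Submodule.smul_mem _ _ (P.bas_mem_aa _ hu)) _
        (Submodule.smul_mem _ _ (P.bas_mem_aa _ hv))
  · simp

/-- simultaneous place permutation of pairs of triples -/
@[reducible]
def pairAct {d : ℕ} : MulAction (Equiv.Perm (Fin d)) (WordTriple β n d × WordTriple β n d) where
  smul σ p := (wAct p.1 σ⁻¹, wAct p.2 σ⁻¹)
  one_smul p := rfl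
  mul_smul σ τ p := by
    change (wAct p.1 (σ * τ)⁻¹, wAct p.2 (σ * τ)⁻¹)
      = (wAct (wAct p.1 τ⁻¹) σ⁻¹, wAct (wAct p.2 τ⁻¹) σ⁻¹)
    rw [wAct_mul, wAct_mul, mul_inv_rev]

theorem sgW_GW [Nontrivial 𝕜] (P : GoodPair 𝕜 A β) {d : ℕ} (w : WordTriple β n d)
    {σ : Equiv.Perm (Fin d)} (hσ : σ ∈ GW P w) : sgW P σ w = 0 := by
  unfold sgW sgnc
  rw [Finset.card_eq_zero, Finset.filter_eq_empty_iff]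
  rintro ⟨k, l⟩ - ⟨h1, h2, h3, h4⟩
  have hfix := (mem_GW P w σ⁻¹).mp ((GW P w).inv_mem hσ)
  have a1 := (bas_od_iff P _).mp h3
  have a2 := (bas_od_iff P _).mp h4
  rw [hfix.2 k (by simp [a1]), hfix.2 l (by simp [a2])] at h2
  exact lt_asymm h1 h2

theorem repr_smul_act {P : GoodPair 𝕜 A β} (D : Tower 𝕜 A β n T P) {d : ℕ}
    (σ : Equiv.Perm (Fin d)) (u : WordTriple β n d) {x : T d} (hx : x ∈ SchurS D d) :
    (D.bas d).repr x (wAct u σ) • D.bas d (wAct u σ)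
      = D.act σ ((D.bas d).repr x u • D.bas d u) := by
  rw [map_smul, act_bas, repr_inv D σ u hx]
  rw [smul_assoc, smul_comm]

theorem stab_dvd [IsDomain 𝕜] [CharZero 𝕜] {P : GoodPair 𝕜 A β} {d : ℕ}
    (u v w : WordTriple β n d) (H : Subgroup (Equiv.Perm (Fin d)))
    (hH : ∀ σ ∈ H, wAct u σ = u ∧ wAct v σ = v ∧ σ ∈ GW P w)
    (hu : IsTriB P u.1 u.2.1 u.2.2) (hv : IsTriB P v.1 v.2.1 v.2.2)
    (hk : ∀ k, P.part (w.1 k) = 1 → ¬ (P.part (u.1 k) = 0 ∧ P.part (v.1 k) = 0)) :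
    Nat.card H ∣ facW P u * facW P v := by
  rw [← card_GW, ← card_GW]
  -- moved positions are `𝔠`-positions of `u` or of `v`
  have hodd : ∀ (z : WordTriple β n d), IsTriB P z.1 z.2.1 z.2.2 → ∀ σ : Equiv.Perm (Fin d),
      wAct z σ = z → ∀ k, σ k ≠ k → P.part (z.1 k) ≠ 2 := by
    intro z hz σ hσ k hk
    exact hz k (σ k) hk.symm ((wAct_eq_iff z z σ).mp hσ k).symm
  have hmove : ∀ σ ∈ H, ∀ k, σ k ≠ k → P.part (u.1 k) ≠ 1 → P.part (v.1 k) = 1 := by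
    intro σ hσ k hne hu1
    obtain ⟨h1, h2, h3⟩ := hH σ hσ
    have hw : P.part (w.1 k) = 1 := by
      by_contra h
      exact hne (((mem_GW P w σ).mp h3).2 k h)
    have h4 := hodd u hu σ h1 k hne
    have h5 := hodd v hv σ h2 k hne
    have h6 := hk k hw
    rcases part_cases P (u.1 k) with h | h | h
    · rcases part_cases P (v.1 k) with h' | h' | h'
      · exact absurd ⟨h, h'⟩ h6
      · exact h'
      · exact absurd h' h5
    · exact absurd h hu1
    · exact absurd h h4
  refine card_dvd_mul_of_restrict H _ _ (fun k => P.part (u.1 k) = 1) ?_ ?_ ?_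
  · intro σ hσ k
    have := (wAct_eq_iff u u σ).mp (hH σ hσ).1 k
    have e : u.1 (σ k) = u.1 k := congrArg (fun z => z.1) this
    simp only [e]
  · intro σ hσ g hg1 hg2
    rw [mem_GW]
    refine ⟨?_, fun k hk => hg2 k hk⟩
    rw [wAct_eq_iff]
    intro k
    by_cases h : P.part (u.1 k) = 1
    · rw [hg1 k h]
      exact (wAct_eq_iff u u σ).mp (hH σ hσ).1 k
    · rw [hg2 k h]
  · intro σ hσ hfix
    rw [mem_GW]
    refine ⟨(hH σ hσ).2.1, fun k hk => ?_⟩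
    by_contra hne
    by_cases h : P.part (u.1 k) = 1
    · exact hne (hfix k h)
    · exact hk (hmove σ hσ k hne h)

theorem good_mul [IsDomain 𝕜] [CharZero 𝕜] {P : GoodPair 𝕜 A β} (D : Tower 𝕜 A β n T P)
    {d : ℕ} {x y : T d} (hx : Good D d x) (hy : Good D d y) : Good D d (x * y) := by
  refine ⟨fun σ => by rw [D.act_mul, hx.1 σ, hy.1 σ], fun w => ?_⟩
  set X := fun u => (D.bas d).repr x u • D.bas d u with hX
  set Y := fun u => (D.bas d).repr y u • D.bas d u with hY
  set f : WordTriple β n d × WordTriple β n d → 𝕜 :=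
    fun p => (D.bas d).repr (X p.1 * Y p.2) w with hf
  set S := ((D.bas d).repr x).support ×ˢ ((D.bas d).repr y).support with hS
  have hsum : (D.bas d).repr (x * y) w = ∑ p ∈ S, f p := by
    have e1 : x = ∑ u ∈ ((D.bas d).repr x).support, X u :=
      ((D.bas d).linearCombination_repr x).symm
    have e2 : y = ∑ u ∈ ((D.bas d).repr y).support, Y u :=
      ((D.bas d).linearCombination_repr y).symm
    conv_lhs => rw [e1, e2]
    rw [Finset.sum_mul_sum, ← Finset.sum_product', map_sum, Finsupp.finsetSum_apply]
  rw [hsum, ← card_GW]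
  letI : MulAction (Equiv.Perm (Fin d)) (WordTriple β n d × WordTriple β n d) := pairAct
  refine card_dvd_of_orbits (Γ := GW P w) f ?_ _ S le_rfl ?_ ?_
  · rintro ⟨σ, hσ⟩ ⟨u, v⟩
    change (D.bas d).repr (X (wAct u σ⁻¹) * Y (wAct v σ⁻¹)) w = (D.bas d).repr (X u * Y v) w
    have hσ' := (GW P w).inv_mem hσ
    simp only [hX, hY]
    rw [repr_smul_act D _ _ hx.1, repr_smul_act D _ _ hy.1, ← D.act_mul]
    conv_lhs => rw [← ((mem_GW P w _).mp hσ').1]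
    rw [repr_act, sgW_GW P w hσ']
    simp
  · rintro ⟨σ, hσ⟩ ⟨u, v⟩ h
    change (wAct u σ⁻¹, wAct v σ⁻¹) ∈ S
    rw [hS, mem_product, Finsupp.mem_support_iff, Finsupp.mem_support_iff] at h ⊢
    exact ⟨(repr_inv_ne D _ _ hx.1).mpr h.1, (repr_inv_ne D _ _ hy.1).mpr h.2⟩
  · rintro ⟨u, v⟩ h
    rw [hS, mem_product, Finsupp.mem_support_iff, Finsupp.mem_support_iff] at h
    by_cases hk : ∃ k, P.part (w.1 k) = 1 ∧ P.part (u.1 k) = 0 ∧ P.part (v.1 k) = 0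
    · obtain ⟨k, k1, k2, k3⟩ := hk
      have : f (u, v) = 0 := repr_mul_vanish D u v w k _ _ k1 k2 k3
      rw [this]; exact dvd_zero _
    have hdv : Nat.card (MulAction.stabilizer (GW P w) (u, v)) ∣ facW P u * facW P v := by
      rw [← Subgroup.card_map_of_injective (f := (GW P w).subtype) (GW P w).subtype_injective]
      refine stab_dvd u v w _ ?_ (triB_of_ne D u hx.1 h.1) (triB_of_ne D v hy.1 h.2) ?_
      · rintro g ⟨σ, hσ, rfl⟩
        have h1 : σ⁻¹ • (u, v) = (u, v) := inv_smul_eq_iff.mpr (MulAction.mem_stabilizer_iff.mp hσ).symm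
        have h2 : (wAct u (σ.1⁻¹)⁻¹, wAct v (σ.1⁻¹)⁻¹) = (u, v) := h1
        rw [inv_inv, Prod.mk.injEq] at h2
        exact ⟨h2.1, h2.2, σ.2⟩
      · intro k k1 k2
        exact hk ⟨k, k1, k2⟩
    refine (Nat.cast_dvd_cast hdv).trans ?_
    obtain ⟨c, hc⟩ := hx.2 u
    obtain ⟨c', hc'⟩ := hy.2 v
    simp only [hf, hX, hY]
    rw [hc, hc', mul_smul, mul_smul, Nat.cast_smul_eq_nsmul, Nat.cast_smul_eq_nsmul,
      smul_mul_smul_comm, map_nsmul, Finsupp.smul_apply, nsmul_eq_mul]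
    exact dvd_mul_right _ _

theorem good_one [IsDomain 𝕜] [CharZero 𝕜] {P : GoodPair 𝕜 A β} (D : Tower 𝕜 A β n T P)
    (d : ℕ) (one : A) (h1 : one ∈ P.aa) : Good D d (xiIdem D one d) := by
  refine ⟨fun σ => ?_, fun w => ?_⟩
  · unfold xiIdem
    rw [map_sum]
    refine Fintype.sum_equiv (Equiv.arrowCongr σ.symm (Equiv.refl _)) _ _ fun r => ?_
    rw [D.act_X _ _ _ _ (fun _ => Or.inl (P.aa_le_ev h1))]
    change _ = D.X (fun _ => one) (r ∘ σ) (r ∘ σ)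
    change _ • D.X (fun _ => one) (r ∘ σ) (r ∘ σ) = _
    by_cases h : sgnc P.od σ (fun _ => one) = 0
    · rw [h]; simp
    · unfold sgnc at h
      obtain ⟨⟨k, l⟩, hkl⟩ := Finset.card_ne_zero.mp h
      have h0 : one = 0 := od_ev_zero P (P.aa_le_ev h1) (mem_filter.mp hkl).2.2.2.1
      have : D.X (fun _ => one) (r ∘ σ) (r ∘ σ) = 0 :=
        (Xmul D (r ∘ σ) (r ∘ σ)).map_coord_zero k h0
      rw [this, smul_zero]
  · by_cases h : ∃ k, P.part (w.1 k) = 1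
    · obtain ⟨k, hk⟩ := h
      unfold xiIdem
      rw [map_sum, Finsupp.finsetSum_apply, Finset.sum_eq_zero]
      · exact dvd_zero _
      · intro r _
        rw [repr_X, Finset.prod_eq_zero (mem_univ k) (repr_aa_zero P h1 hk), mul_zero]
    · have : facW P w = 1 := by
        unfold facW facSel
        refine Finset.prod_eq_one fun y hy => ?_
        simp only [mem_filter] at hy
        obtain ⟨hy1, hy2⟩ := hy
        obtain ⟨k, -, rfl⟩ := mem_image.mp hy1
        exact absurd ⟨k, hy2⟩ h
      rw [this]; simp

/-- The `𝕜`-submodule `T^A_𝔞(n,d)` is closed under the multiplication of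
`S^A(n,d)` (and is contained in `S^A(n,d)`), i.e. it is a `𝕜`-subalgebra of `S^A(n,d)`.
Moreover, if `(A,𝔞)` is a unital good pair (there is a unit `1_A` of `A` lying in `𝔞`),
then `T^A_𝔞(n,d)` contains the identity `1_A ⊗ ⋯ ⊗ 1_A = Σ_r ξ^{1_A}_{r_1,r_1} ⊗ ⋯` of
`S^A(n,d)`, i.e. it is a unital subalgebra. -/
theorem statement0 {𝕜 A β : Type} [CommRing 𝕜] [IsDomain 𝕜] [CharZero 𝕜]
    [NonUnitalRing A] [Module 𝕜 A] [SMulCommClass 𝕜 A A] [IsScalarTower 𝕜 A A]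
    {n : ℕ} (hn : 0 < n) {T : ℕ → Type} [∀ e, NonUnitalRing (T e)] [∀ e, Module 𝕜 (T e)]
    (P : GoodPair 𝕜 A β) (D : Tower 𝕜 A β n T P) (ord : LinearOrder (A × Fin n × Fin n))
    (d : ℕ) :
    (SchurT D ord d ≤ SchurS D d ∧
      ∀ x ∈ SchurT D ord d, ∀ y ∈ SchurT D ord d, x * y ∈ SchurT D ord d) ∧
    (∀ one : A, one ∈ P.aa → (∀ a : A, one * a = a ∧ a * one = a) →
      xiIdem D one d ∈ SchurT D ord d) := by
  refine ⟨⟨fun x hx => (good_of_mem D ord hx).1, fun x hx y hy => ?_⟩, fun one h1 _ => ?_⟩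
  · exact mem_of_good D ord _ _ le_rfl (good_mul D (good_of_mem D ord hx) (good_of_mem D ord hy))
  · exact mem_of_good D ord _ _ le_rfl (good_one D d one h1)
end GS
end
end

section
/- Let (𝐚,𝐫,𝐭), (𝐜,𝐭,𝐮) ∈ Tri^B(n,d), and let 1 ≤ k < d be such that a_k and c_k have the same parity, or a_{k+1} and c_{k+1} have the same parity. Let s_k ∈ S_d be the transposition of k and k+1. Then (−1)^{⟨𝐚,𝐫,𝐭⟩ + ⟨𝐜,𝐭,𝐮⟩ + ⟨𝐚,𝐜⟩} = (−1)^{⟨𝐚s_k, 𝐫s_k, 𝐭s_k⟩ + ⟨𝐜s_k, 𝐭s_k, 𝐮s_k⟩ + ⟨𝐚s_k, 𝐜s_k⟩}. -/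
open Finset

open scoped Classical TensorProduct

noncomputable section

namespace GS

variable {𝕜 A β : Type} [CommRing 𝕜] [NonUnitalRing A] [Module 𝕜 A]

variable {n : ℕ} {T : ℕ → Type} [∀ e, NonUnitalRing (T e)] [∀ e, Module 𝕜 (T e)]

theorem count_swap_aux {d : ℕ} (k k' : Fin d) (hkk : (k' : ℕ) = (k : ℕ) + 1)
    (Q : Fin d → Fin d → Prop) :
    (univ.filter fun p : Fin d × Fin d =>
        p.1 < p.2 ∧ Q (Equiv.swap k k' p.1) (Equiv.swap k k' p.2)).card
        + (if Q k k' then 1 else 0)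
      = (univ.filter fun p : Fin d × Fin d => p.1 < p.2 ∧ Q p.1 p.2).card
        + (if Q k' k then 1 else 0) := by
  have hlt : k < k' := by rw [Fin.lt_def]; omega
  have h1 : (univ.filter fun p : Fin d × Fin d =>
        p.1 < p.2 ∧ Q (Equiv.swap k k' p.1) (Equiv.swap k k' p.2)).card
      = (univ.filter fun p : Fin d × Fin d =>
        Equiv.swap k k' p.1 < Equiv.swap k k' p.2 ∧ Q p.1 p.2).card := by
    apply Finset.card_bij (fun p _ => (Equiv.swap k k' p.1, Equiv.swap k k' p.2))
    · intro p hp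
      simpa using hp
    · intro p _ q _ h
      simpa [Prod.ext_iff] using h
    · intro p hp
      exact ⟨(Equiv.swap k k' p.1, Equiv.swap k k' p.2), by simpa using hp, by simp⟩
  rw [h1]
  simp only [Finset.card_filter]
  have e1 : (if Q k k' then 1 else 0) = ∑ p : Fin d × Fin d,
      if p = (k, k') then (if Q k k' then 1 else 0) else 0 := by simp
  have e2 : (if Q k' k then 1 else 0) = ∑ p : Fin d × Fin d,
      if p = (k', k) then (if Q k' k then 1 else 0) else 0 := by simp
  rw [e1, e2, ← Finset.sum_add_distrib, ← Finset.sum_add_distrib]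
  apply Finset.sum_congr rfl
  rintro ⟨i, j⟩ _
  by_cases hA : (i, j) = (k, k')
  · obtain ⟨rfl, rfl⟩ := Prod.ext_iff.1 hA
    simp [hlt, hlt.ne, hlt.ne', not_lt_of_gt hlt]
  by_cases hB : (i, j) = (k', k)
  · obtain ⟨rfl, rfl⟩ := Prod.ext_iff.1 hB
    simp [hlt, hlt.ne, hlt.ne', not_lt_of_gt hlt]
  simp only [hA, hB, if_false, add_zero]
  have : Equiv.swap k k' i < Equiv.swap k k' j ↔ i < j := by
    simp only [Prod.mk.injEq, not_and, Fin.ext_iff] at hA hB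
    simp only [Equiv.swap_apply_def, Fin.ext_iff, Fin.lt_def]
    split_ifs <;> omega
  simp only [this]

theorem koz_eq_aux {𝕜 A : Type} [CommRing 𝕜] [NonUnitalRing A] [Module 𝕜 A]
    (od : Submodule 𝕜 A) {d : ℕ} (a c : Fin d → A) :
    koz od a c = (univ.filter fun p : Fin d × Fin d =>
      p.1 < p.2 ∧ (c p.1 ∈ od ∧ a p.2 ∈ od)).card := by
  unfold koz
  apply Finset.card_bij (fun p _ => (p.2, p.1))
  · intro p hp
    simp at hp ⊢; tauto
  · intro p _ q _ h
    simp at h; ext <;> simp [h]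
  · intro p hp
    exact ⟨(p.2, p.1), by simp at hp ⊢; tauto, by simp⟩

theorem bas_od_aux {𝕜 A β : Type} [CommRing 𝕜] [IsDomain 𝕜] [NonUnitalRing A] [Module 𝕜 A]
    (P : GoodPair 𝕜 A β) (i : β) : P.bas i ∈ P.od ↔ P.part i = 2 := by
  refine ⟨fun h => ?_, P.bas_mem_od i⟩
  by_contra hne
  have hev : P.bas i ∈ P.ev := by
    have h3 : P.part i = 0 ∨ P.part i = 1 := by
      generalize P.part i = x at hne
      fin_cases x <;> simp_all
    rcases h3 with h3 | h3
    · exact P.aa_le_ev (P.bas_mem_aa i h3)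
    · rw [← P.aa_sup_cc]
      exact Submodule.mem_sup_right (P.bas_mem_cc i h3)
  exact P.bas.ne_zero i (Submodule.disjoint_def.1 P.compl.disjoint _ hev h)

theorem ang_swap_aux {𝕜 A β : Type} [CommRing 𝕜] [IsDomain 𝕜] [NonUnitalRing A] [Module 𝕜 A]
    {n : ℕ} (P : GoodPair 𝕜 A β) (ord : LinearOrder (A × Fin n × Fin n)) {d : ℕ}
    (a : Fin d → β) (r t : Fin d → Fin n) (ha : IsTriB P a r t)
    (k k' : Fin d) (hkk : (k' : ℕ) = (k : ℕ) + 1) :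
    ∃ x y : ℕ, ang P.od ord ((fun j => P.bas (a j)) ∘ (Equiv.swap k k'))
          (r ∘ (Equiv.swap k k')) (t ∘ (Equiv.swap k k')) + x
        = ang P.od ord (fun j => P.bas (a j)) r t + y ∧
      x + y = if P.part (a k) = 2 ∧ P.part (a k') = 2 then 1 else 0 := by
  have key := count_swap_aux k k' hkk (fun i j => P.bas (a i) ∈ P.od ∧ P.bas (a j) ∈ P.od ∧
    ord.lt (P.bas (a j), r j, t j) (P.bas (a i), r i, t i))
  refine ⟨if P.bas (a k) ∈ P.od ∧ P.bas (a k') ∈ P.od ∧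
      ord.lt (P.bas (a k'), r k', t k') (P.bas (a k), r k, t k) then 1 else 0,
    if P.bas (a k') ∈ P.od ∧ P.bas (a k) ∈ P.od ∧
      ord.lt (P.bas (a k), r k, t k) (P.bas (a k'), r k', t k') then 1 else 0, ?_, ?_⟩
  · simp only [ang, Function.comp_apply]
    convert key using 1
    · congr!
    · congr!
  simp only [bas_od_aux]
  by_cases h1 : P.part (a k) = 2
  swap
  · simp [h1]
  by_cases h2 : P.part (a k') = 2
  swap
  · simp [h2]
  have hne : (P.bas (a k), r k, t k) ≠ (P.bas (a k'), r k', t k') := by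
    intro h
    simp only [Prod.mk.injEq] at h
    refine ha k k' (by intro e; rw [← e] at hkk; omega) ?_ h1
    rw [P.bas.injective h.1, h.2.1, h.2.2]
  simp only [h1, h2, true_and, and_self, if_true]
  rcases @lt_or_gt_of_ne _ ord _ _ hne with h | h
  · have h' := @not_lt_of_gt _ ord.toPreorder _ _ h
    rw [if_neg h', if_pos h]
  · have h' := @not_lt_of_gt _ ord.toPreorder _ _ h
    rw [if_pos h, if_neg h']

/-- Let `(𝐚,𝐫,𝐭), (𝐜,𝐭,𝐮) ∈ Tri^B(n,d)` and let `1 ≤ k < d` (here `k` is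
`0`-indexed, with `(k:ℕ)+1 < d`) be such that `a_k` and `c_k` have the same parity, or
`a_{k+1}` and `c_{k+1}` have the same parity.  With `s_k` the transposition of `k` and `k+1`,
`(−1)^{⟨𝐚,𝐫,𝐭⟩+⟨𝐜,𝐭,𝐮⟩+⟨𝐚,𝐜⟩} = (−1)^{⟨𝐚s_k,𝐫s_k,𝐭s_k⟩+⟨𝐜s_k,𝐭s_k,𝐮s_k⟩+⟨𝐚s_k,𝐜s_k⟩}`. -/
theorem statement2 {𝕜 A β : Type} [CommRing 𝕜] [IsDomain 𝕜] [CharZero 𝕜]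
    [NonUnitalRing A] [Module 𝕜 A] [SMulCommClass 𝕜 A A] [IsScalarTower 𝕜 A A]
    {n : ℕ} (hn : 0 < n)
    (P : GoodPair 𝕜 A β) (ord : LinearOrder (A × Fin n × Fin n)) (d : ℕ)
    (a c : Fin d → β) (r t u : Fin d → Fin n)
    (ha : IsTriB P a r t) (hc : IsTriB P c t u)
    (k : Fin d) (hk : (k : ℕ) + 1 < d)
    (hpar : (P.part (a k) = 2 ↔ P.part (c k) = 2) ∨
      (P.part (a ⟨(k : ℕ) + 1, hk⟩) = 2 ↔ P.part (c ⟨(k : ℕ) + 1, hk⟩) = 2)) :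
    ((-1 : ℤ) ^ (ang P.od ord (fun j => P.bas (a j)) r t
        + ang P.od ord (fun j => P.bas (c j)) t u
        + koz P.od (fun j => P.bas (a j)) (fun j => P.bas (c j)))) =
      ((-1 : ℤ) ^ (ang P.od ord ((fun j => P.bas (a j)) ∘ (Equiv.swap k ⟨(k : ℕ) + 1, hk⟩))
          (r ∘ (Equiv.swap k ⟨(k : ℕ) + 1, hk⟩)) (t ∘ (Equiv.swap k ⟨(k : ℕ) + 1, hk⟩))
        + ang P.od ord ((fun j => P.bas (c j)) ∘ (Equiv.swap k ⟨(k : ℕ) + 1, hk⟩))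
          (t ∘ (Equiv.swap k ⟨(k : ℕ) + 1, hk⟩)) (u ∘ (Equiv.swap k ⟨(k : ℕ) + 1, hk⟩))
        + koz P.od ((fun j => P.bas (a j)) ∘ (Equiv.swap k ⟨(k : ℕ) + 1, hk⟩))
          ((fun j => P.bas (c j)) ∘ (Equiv.swap k ⟨(k : ℕ) + 1, hk⟩)))) := by
  obtain ⟨x, y, h1, h1'⟩ := ang_swap_aux P ord a r t ha k ⟨(k : ℕ) + 1, hk⟩ rfl
  obtain ⟨z, w, h2, h2'⟩ := ang_swap_aux P ord c t u hc k ⟨(k : ℕ) + 1, hk⟩ rfl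
  have h3 := count_swap_aux k ⟨(k : ℕ) + 1, hk⟩ rfl
    (fun i j => P.bas (c i) ∈ P.od ∧ P.bas (a j) ∈ P.od)
  rw [koz_eq_aux, koz_eq_aux]
  simp only [Function.comp_apply] at h3 ⊢
  apply neg_one_pow_congr
  simp only [bas_od_aux] at h1 h2 h3 ⊢
  generalize (⟨(k : ℕ) + 1, hk⟩ : Fin d) = k' at *
  by_cases p1 : P.part (a k) = 2 <;> by_cases p2 : P.part (a k') = 2 <;>
    by_cases p3 : P.part (c k) = 2 <;> by_cases p4 : P.part (c k') = 2 <;>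
    simp only [p1, p2, p3, p4, true_and, and_self, and_true, and_false, false_and, if_true,
      if_false, iff_true, iff_false, false_iff, true_iff, or_self, not_true, not_false_iff]
      at hpar h1' h2' h3 <;>
    grind
end GS
end
end
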